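/- Uniqueness of the fundamental solution: Suppose Γ₁ and Γ₂ are two families (Γ_k(t,s))_{t,s∈ℝ} of bounded operators on H satisfying: (1) uniform boundedness sup_{t,s} ‖Γ_k(t,s)‖ < ∞; (2) causality Γ_k(t,s) = 0 for s > t; (3) Borel measurability of (t,s) ↦ ⟨Γ_k(t,s)a, ã⟩ for a, ã in a fixed countable dense subset D of H; (4) for all φ ∈ C_c^∞(ℝ) and a ∈ D, the weak solution u of ∂_t u + 𝓑u = φ ⊗ a satisfies ⟨u(t), ã⟩ = ∫_{-∞}^t φ(s)⟨Γ_k(t,s)a, ã⟩ ds for a.e. t and all ã ∈ D. Then Γ₁(t,s) = Γ₂(t,s) for almost every (t,s) ∈ ℝ². -/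

import Mathlib

open MeasureTheory Filter Set
open scoped ENNReal Topology ComplexConjugate InnerProductSpace

noncomputable section

/-- A bounded measurable kernel on the plane that annihilates every test function in its second
variable vanishes almost everywhere. -/
theorem kernel_ae_zero (f : ℝ × ℝ → ℂ) (hf : Measurable f) (C : ℝ) (hC : ∀ p, ‖f p‖ ≤ C)
    (h : ∀ φ : ℝ → ℝ, ContDiff ℝ (⊤ : ℕ∞) φ → HasCompactSupport φ →
      ∀ᵐ t : ℝ, ∫ s, (φ s : ℂ) * f (t, s) = 0) :
    ∀ᵐ p : ℝ × ℝ ∂((volume : Measure ℝ).prod volume), f p = 0 := by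
  have hloc : ∀ g : ℝ → ℂ, AEStronglyMeasurable g volume → (∃ K : ℝ, ∀ x, ‖g x‖ ≤ K) →
      LocallyIntegrable g volume := by
    rintro g hg ⟨K, hK⟩
    exact (locallyIntegrable_const (μ := volume) K).mono hg
      (Eventually.of_forall fun x => (hK x).trans (Real.le_norm_self K))
  have hset : MeasurableSet {p : ℝ × ℝ | f p = 0} := hf (measurableSet_singleton 0)
  -- Step 1: integrals over a fixed interval in `t` vanish for a.e. `s`
  have step1 : ∀ q : ℝ, ∀ᵐ s : ℝ, ∫ t in (0 : ℝ)..q, f (t, s) = 0 := by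
    intro q
    have hsm : StronglyMeasurable fun s : ℝ => ∫ t in (0 : ℝ)..q, f (t, s) := by
      simp only [intervalIntegral]
      have hu : StronglyMeasurable fun z : ℝ × ℝ => f (z.2, z.1) :=
        (hf.comp measurable_swap).stronglyMeasurable
      exact (hu.integral_prod_right' (ν := volume.restrict (Ioc 0 q))).sub
        (hu.integral_prod_right' (ν := volume.restrict (Ioc q 0)))
    refine ae_eq_zero_of_integral_contDiff_smul_eq_zero
      (hloc _ hsm.aestronglyMeasurable ⟨C * |q - 0|, fun s => ?_⟩) ?_
    · exact intervalIntegral.norm_integral_le_of_norm_le_const fun t _ => hC _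
    · intro φ hφ hφc
      have hint : Integrable (Function.uncurry fun t s : ℝ => (φ s : ℂ) * f (t, s))
          ((volume.restrict (uIoc 0 q)).prod volume) := by
        have h1 : Integrable (fun s : ℝ => (φ s : ℂ)) volume :=
          (hφ.continuous.integrable_of_hasCompactSupport hφc).ofReal
        have : IsFiniteMeasure (volume.restrict (uIoc 0 q)) :=
          ⟨by rw [Measure.restrict_apply_univ, uIoc]; exact measure_Ioc_lt_top⟩
        exact (h1.comp_snd (volume.restrict (uIoc 0 q))).mul_bdd (c := C)
          hf.aestronglyMeasurable (Eventually.of_forall hC)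
      have hsw := intervalIntegral_integral_swap hint
      have h0 : ∫ t in (0 : ℝ)..q, ∫ s, (φ s : ℂ) * f (t, s) = 0 := by
        rw [intervalIntegral.integral_congr_ae (g := fun _ => (0 : ℂ))]
        · simp
        · filter_upwards [h φ hφ hφc] with t ht _ using ht
      rw [h0] at hsw
      rw [hsw]
      refine integral_congr_ae (Eventually.of_forall fun s => ?_)
      simp [intervalIntegral.integral_const_mul]
  -- Step 2: Lebesgue differentiation
  have step2 : ∀ᵐ s : ℝ, ∀ᵐ t : ℝ, f (t, s) = 0 := by
    have hall : ∀ᵐ s : ℝ, ∀ q : ℚ, ∫ t in (0 : ℝ)..(q : ℝ), f (t, s) = 0 :=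
      ae_all_iff.2 fun q => step1 q
    filter_upwards [hall] with s hs
    have hm : Measurable fun t : ℝ => f (t, s) := hf.comp (by fun_prop)
    have hl : LocallyIntegrable (fun t : ℝ => f (t, s)) volume :=
      hloc _ hm.aestronglyMeasurable ⟨C, fun t => hC _⟩
    have hii : ∀ a b : ℝ, IntervalIntegrable (fun t : ℝ => f (t, s)) volume a b :=
      fun a b => (hl.integrableOn_isCompact isCompact_uIcc).intervalIntegrable
    have hcont : Continuous fun x : ℝ => ∫ t in (0 : ℝ)..x, f (t, s) :=
      intervalIntegral.continuous_primitive hii 0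
    have hz : (fun x : ℝ => ∫ t in (0 : ℝ)..x, f (t, s)) = fun _ => 0 :=
      Rat.denseRange_cast.equalizer hcont continuous_const (funext fun q => hs q)
    filter_upwards [LocallyIntegrable.ae_hasDerivAt_integral hl] with x hx
    have := hx 0
    rw [hz] at this
    exact this.unique (hasDerivAt_const x 0)
  rw [Measure.ae_prod_iff_ae_ae hset]
  exact (Measure.ae_ae_comm (p := fun t s => f (t, s) = 0) hset).2 step2

/-- Uniqueness of the fundamental solution.  `H` is a separable complex Hilbert
space, `D` a countable dense subset.  `Γ₁, Γ₂` are two families of bounded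
operators on `H` that are uniformly bounded, causal (`Γ(t,s) = 0` for `s > t`),
weakly Borel measurable, and both represent the (unique) weak solution of
`∂_t u + 𝓑u = φ ⊗ a` for every `φ ∈ C_c^∞(ℝ)` and `a ∈ D`:
`⟨u(t), ã⟩ = ∫_{-∞}^t φ(s) ⟨Γ_k(t,s)a, ã⟩ ds` for a.e. `t` and all `ã ∈ D`.
Then `Γ₁ = Γ₂` almost everywhere on `ℝ²`. -/
theorem fundamental_solution_unique
    {H : Type*} [NormedAddCommGroup H] [InnerProductSpace ℂ H] [CompleteSpace H]
    [TopologicalSpace.SeparableSpace H]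
    (D : Set H) (hDcount : D.Countable) (hDdense : Dense D)
    (Γ₁ Γ₂ : ℝ → ℝ → H →L[ℂ] H)
    (hbdd₁ : ∃ C : ℝ, ∀ t s₀ : ℝ, ‖Γ₁ t s₀‖ ≤ C)
    (hbdd₂ : ∃ C : ℝ, ∀ t s₀ : ℝ, ‖Γ₂ t s₀‖ ≤ C)
    (hcausal₁ : ∀ t s₀ : ℝ, t < s₀ → Γ₁ t s₀ = 0)
    (hcausal₂ : ∀ t s₀ : ℝ, t < s₀ → Γ₂ t s₀ = 0)
    (hmeas₁ : ∀ a ∈ D, ∀ b ∈ D, Measurable fun p : ℝ × ℝ => ⟪b, Γ₁ p.1 p.2 a⟫_ℂ)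
    (hmeas₂ : ∀ a ∈ D, ∀ b ∈ D, Measurable fun p : ℝ × ℝ => ⟪b, Γ₂ p.1 p.2 a⟫_ℂ)
    -- both families represent the same (unique) weak solution of
    -- `∂_t u + 𝓑u = φ ⊗ a`:
    (hrep : ∀ φ : ℝ → ℝ, ContDiff ℝ (⊤ : ℕ∞) φ → HasCompactSupport φ → ∀ a ∈ D,
      ∃ u : ℝ → H,
        (∀ b ∈ D, ∀ᵐ t : ℝ,
          ⟪b, u t⟫_ℂ = ∫ s₀ in Set.Iic t, (φ s₀ : ℂ) * ⟪b, Γ₁ t s₀ a⟫_ℂ) ∧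
        (∀ b ∈ D, ∀ᵐ t : ℝ,
          ⟪b, u t⟫_ℂ = ∫ s₀ in Set.Iic t, (φ s₀ : ℂ) * ⟪b, Γ₂ t s₀ a⟫_ℂ)) :
    ∀ᵐ p : ℝ × ℝ ∂((volume : Measure ℝ).prod volume), Γ₁ p.1 p.2 = Γ₂ p.1 p.2 := by
  obtain ⟨C₁, hC₁⟩ := hbdd₁
  obtain ⟨C₂, hC₂⟩ := hbdd₂
  have key : ∀ a ∈ D, ∀ b ∈ D, ∀ᵐ p : ℝ × ℝ ∂((volume : Measure ℝ).prod volume),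
      ⟪b, Γ₁ p.1 p.2 a⟫_ℂ - ⟪b, Γ₂ p.1 p.2 a⟫_ℂ = 0 := by
    intro a ha b hb
    have bd : ∀ (Γ : ℝ → ℝ → H →L[ℂ] H) (C : ℝ), (∀ t s₀ : ℝ, ‖Γ t s₀‖ ≤ C) →
        ∀ t s : ℝ, ‖⟪b, Γ t s a⟫_ℂ‖ ≤ ‖b‖ * (C * ‖a‖) := by
      intro Γ C hC t s
      refine (norm_inner_le_norm _ _).trans ?_
      gcongr
      exact (Γ t s).le_of_opNorm_le (hC t s) a
    refine kernel_ae_zero _ ((hmeas₁ a ha b hb).sub (hmeas₂ a ha b hb))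
      (‖b‖ * (C₁ * ‖a‖) + ‖b‖ * (C₂ * ‖a‖)) (fun p => ?_) ?_
    · exact (norm_sub_le _ _).trans (add_le_add (bd Γ₁ C₁ hC₁ _ _) (bd Γ₂ C₂ hC₂ _ _))
    · intro φ hφ hφc
      obtain ⟨u, hu₁, hu₂⟩ := hrep φ hφ hφc a ha
      have full : ∀ (Γ : ℝ → ℝ → H →L[ℂ] H), (∀ t s₀ : ℝ, t < s₀ → Γ t s₀ = 0) → ∀ t : ℝ,
          ∫ s₀ in Set.Iic t, (φ s₀ : ℂ) * ⟪b, Γ t s₀ a⟫_ℂ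
            = ∫ s₀, (φ s₀ : ℂ) * ⟪b, Γ t s₀ a⟫_ℂ := by
        intro Γ hΓ t
        refine setIntegral_eq_integral_of_forall_compl_eq_zero fun s hs => ?_
        rw [hΓ t s (not_le.1 hs)]
        simp
      have h1 : Integrable (fun s : ℝ => (φ s : ℂ)) volume :=
        (hφ.continuous.integrable_of_hasCompactSupport hφc).ofReal
      have int : ∀ (Γ : ℝ → ℝ → H →L[ℂ] H) (C : ℝ), (∀ t s₀ : ℝ, ‖Γ t s₀‖ ≤ C) →
          (Measurable fun p : ℝ × ℝ => ⟪b, Γ p.1 p.2 a⟫_ℂ) → ∀ t : ℝ,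
          Integrable (fun s : ℝ => (φ s : ℂ) * ⟪b, Γ t s a⟫_ℂ) volume := by
        intro Γ C hC hm t
        have hm' : Measurable fun s : ℝ => ⟪b, Γ t s a⟫_ℂ :=
          hm.comp (measurable_prodMk_left (x := t))
        exact h1.mul_bdd (c := ‖b‖ * (C * ‖a‖)) hm'.aestronglyMeasurable
          (Eventually.of_forall fun s => bd Γ C hC t s)
      filter_upwards [hu₁ b hb, hu₂ b hb] with t ht₁ ht₂
      rw [full Γ₁ hcausal₁] at ht₁
      rw [full Γ₂ hcausal₂] at ht₂
      simp only [Pi.sub_apply, mul_sub]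
      rw [integral_sub (int Γ₁ C₁ hC₁ (hmeas₁ a ha b hb) t)
        (int Γ₂ C₂ hC₂ (hmeas₂ a ha b hb) t), ← ht₁, ← ht₂, sub_self]
  have hall : ∀ᵐ p : ℝ × ℝ ∂((volume : Measure ℝ).prod volume), ∀ a ∈ D, ∀ b ∈ D,
      ⟪b, Γ₁ p.1 p.2 a⟫_ℂ - ⟪b, Γ₂ p.1 p.2 a⟫_ℂ = 0 :=
    (ae_ball_iff hDcount).2 fun a ha => (ae_ball_iff hDcount).2 fun b hb => key a ha b hb
  filter_upwards [hall] with p hp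
  have hon : Set.EqOn (Γ₁ p.1 p.2) (Γ₂ p.1 p.2) D := by
    intro a ha
    have : (fun b : H => ⟪b, Γ₁ p.1 p.2 a⟫_ℂ) = fun b : H => ⟪b, Γ₂ p.1 p.2 a⟫_ℂ :=
      Continuous.ext_on hDdense (by fun_prop) (by fun_prop)
        fun b hb => sub_eq_zero.1 (hp a ha b hb)
    exact ext_inner_left ℂ fun b => congrFun this b
  have := Continuous.ext_on hDdense (Γ₁ p.1 p.2).continuous (Γ₂ p.1 p.2).continuous hon
  exact DFunLike.coe_injective this
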